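/- Let T > 0, let σ : ℝ → ℝ be Lipschitz continuous with σ(x) > 0 for all x, let b and b̃ belong to the class M, and let f : ℝ → ℝ be of class C² with f'(x) ≠ 0 for all x ∈ ℝ. Let u be a classical solution of the parabolic equation associated with (b, σ, f) and let ũ be a classical solution of the parabolic equation associated with (b̃, σ, f), and suppose there exist ε ∈ (0, T) and a nonempty open set ω ⊂ ℝ with u = ũ on (0, ε) × ω. Let x₀ ∈ ω and x₂ > x₀ be such that b − b̃ has a constant sign on [x₀, x₂] (i.e., b − b̃ ≥ 0 on [x₀, x₂] or b − b̃ ≤ 0 on [x₀, x₂]). Then b(x) = b̃(x) for all x ∈ [x₀, x₂]. -/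

import Mathlib

open Set Filter

/-- A function `ψ : ℝ → ℝ` is piecewise analytic if there exist `δ > 0`, a strictly
increasing sequence `(κ j)_{j ∈ ℤ}` tending to `-∞` at `-∞` and `+∞` at `+∞` with
`κ (j+1) - κ j > δ`, and functions `φ j` analytic on `[κ j, κ (j+1)]`, such that
`ψ = φ j` on `[κ j, κ (j+1))`. -/
def PiecewiseAnalytic (ψ : ℝ → ℝ) : Prop :=
  ∃ (δ : ℝ) (κ : ℤ → ℝ) (φ : ℤ → ℝ → ℝ),
    0 < δ ∧ StrictMono κ ∧
    Tendsto κ atBot atBot ∧ Tendsto κ atTop atTop ∧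
    (∀ j : ℤ, δ < κ (j + 1) - κ j) ∧
    (∀ j : ℤ, AnalyticOn ℝ (φ j) (Icc (κ j) (κ (j + 1)))) ∧
    (∀ j : ℤ, ∀ x ∈ Ico (κ j) (κ (j + 1)), ψ x = φ j x)

/-- The class `M` of Lipschitz-continuous, piecewise analytic functions on `ℝ`. -/
def ClassM (ψ : ℝ → ℝ) : Prop :=
  (∃ K, LipschitzWith K ψ) ∧ PiecewiseAnalytic ψ

/-- `u : [0,T) × ℝ → ℝ` is a classical solution of
`∂ₜ u = (1/2) σ(x)² ∂ₓₓ u + b(x) ∂ₓ u`, `u(0, ·) = f`: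
`u`, `∂ₜ u`, `∂ₓ u`, `∂ₓₓ u` exist and are continuous on `[0,T) × ℝ`, the PDE holds
there, and the initial condition holds. -/
def IsClassicalSolution (T : ℝ) (b σ f : ℝ → ℝ) (u : ℝ → ℝ → ℝ) : Prop :=
  ContinuousOn (fun p : ℝ × ℝ => u p.1 p.2) (Ico 0 T ×ˢ univ) ∧
  (∀ t ∈ Ico 0 T, ∀ x : ℝ, DifferentiableAt ℝ (fun s => u s x) t) ∧
  (∀ t ∈ Ico 0 T, ∀ x : ℝ, DifferentiableAt ℝ (fun y => u t y) x) ∧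
  (∀ t ∈ Ico 0 T, ∀ x : ℝ, DifferentiableAt ℝ (deriv (fun y => u t y)) x) ∧
  ContinuousOn (fun p : ℝ × ℝ => deriv (fun s => u s p.2) p.1) (Ico 0 T ×ˢ univ) ∧
  ContinuousOn (fun p : ℝ × ℝ => deriv (fun y => u p.1 y) p.2) (Ico 0 T ×ˢ univ) ∧
  ContinuousOn (fun p : ℝ × ℝ => deriv (deriv (fun y => u p.1 y)) p.2) (Ico 0 T ×ˢ univ) ∧
  (∀ t ∈ Ico 0 T, ∀ x : ℝ,
    deriv (fun s => u s x) t =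
      (1 / 2) * (σ x) ^ 2 * deriv (deriv (fun y => u t y)) x
        + b x * deriv (fun y => u t y) x) ∧
  (∀ x : ℝ, u 0 x = f x)

/-- `ψ` has a constant sign on `s`: it is nonnegative on all of `s` or nonpositive on
all of `s`. -/
def ConstSignOn (ψ : ℝ → ℝ) (s : Set ℝ) : Prop :=
  (∀ x ∈ s, 0 ≤ ψ x) ∨ (∀ x ∈ s, ψ x ≤ 0)

/-!
Put `U = u - ũ`. Subtracting the two equations gives
`∂ₜ U - (σ² / 2) ∂ₓₓ U - b ∂ₓ U = (b - b̃) ∂ₓ ũ`, and for small times `∂ₓ ũ` keeps the constant sign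
of `f'`. If `b x₁ ≠ b̃ x₁`, then `e = (b x₁ - b̃ x₁) f' x₁` makes `e U` a supersolution on
`[0, τ] × [x₀, x₁]` that vanishes at time `0` and has `∂ₜ (e U) (0, x₁) = e² > 0`. It is therefore
positive on the edge `x = x₁` for small positive times, and by the strong minimum principle it is
positive arbitrarily close to `x₀`, where the observation says that it vanishes.

The drift `b` is bounded on `[x₀, x₂]`: it is continuous there, because the equation at time `0`
can be solved for it. The strong minimum principle is obtained by comparison with an exponential
wave that travels from the right edge to the left edge.
-/

open Topology

section Calculus

theorem deriv_deriv_nonneg_of_isLocalMin {g : ℝ → ℝ} {x : ℝ} (hmin : IsLocalMin g x)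
    (hg : ContinuousAt g x) : 0 ≤ deriv (deriv g) x := by
  by_contra! hneg
  have hmax : IsLocalMax g x := isLocalMax_of_deriv_deriv_neg hneg hmin.deriv_eq_zero hg
  have hconst : g =ᶠ[𝓝 x] fun _ ↦ g x := by
    filter_upwards [hmin, hmax] with y hle hge using le_antisymm hge hle
  simp [hconst.deriv.deriv_eq] at hneg

theorem eventually_sign_sub_eq_of_deriv_pos {g : ℝ → ℝ} {t : ℝ} (hg : 0 < deriv g t) :
    ∀ᶠ s in 𝓝 t, SignType.sign (g s - g t) = SignType.sign (s - t) :=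
  eventually_nhdsWithin_sign_eq_of_deriv_pos (f := fun s ↦ g s - g t) (by simpa using hg)
    (sub_self _)

theorem eventually_lt_of_deriv_pos {g : ℝ → ℝ} {t : ℝ} (hg : 0 < deriv g t) :
    ∀ᶠ s in 𝓝[>] t, g t < g s := by
  filter_upwards [nhdsWithin_le_nhds (eventually_sign_sub_eq_of_deriv_pos hg),
    self_mem_nhdsWithin] with s hs hts
  rwa [sign_pos (sub_pos.2 (mem_Ioi.1 hts)), sign_eq_one_iff, sub_pos] at hs

theorem deriv_nonpos_of_eventually_le_left {g : ℝ → ℝ} {t : ℝ} (h : ∀ᶠ s in 𝓝[<] t, g t ≤ g s) :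
    deriv g t ≤ 0 := by
  by_contra! hpos
  obtain ⟨s, hle, hsign, hst⟩ := (h.and (((eventually_sign_sub_eq_of_deriv_pos hpos).filter_mono
    nhdsWithin_le_nhds).and eventually_mem_nhdsWithin)).exists
  rw [sign_neg (sub_neg.2 (mem_Iio.1 hst)), sign_eq_neg_one_iff, sub_neg] at hsign
  exact hsign.not_ge hle

theorem deriv_mul_deriv_pos {f : ℝ → ℝ} {s : Set ℝ} (hs : Convex ℝ s)
    (hf : ∀ x ∈ s, DifferentiableAt ℝ f x) (hf' : ∀ x ∈ s, deriv f x ≠ 0) {x y : ℝ}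
    (hx : x ∈ s) (hy : y ∈ s) : 0 < deriv f x * deriv f y := by
  rcases hasDerivWithinAt_forall_lt_or_forall_gt_of_forall_ne hs
    (fun z hz ↦ (hf z hz).hasDerivAt.hasDerivWithinAt) hf' with hneg | hpos
  · exact mul_pos_of_neg_of_neg (hneg x hx) (hneg y hy)
  · exact mul_pos (hpos x hx) (hpos y hy)

end Calculus

theorem ConstSignOn.mono {ψ : ℝ → ℝ} {s t : Set ℝ} (h : ConstSignOn ψ t) (hst : s ⊆ t) :
    ConstSignOn ψ s :=
  h.imp (fun hψ x hx ↦ hψ x (hst hx)) fun hψ x hx ↦ hψ x (hst hx)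

theorem ConstSignOn.mul_nonneg {ψ : ℝ → ℝ} {s : Set ℝ} (h : ConstSignOn ψ s) {x y : ℝ}
    (hx : x ∈ s) (hy : y ∈ s) : 0 ≤ ψ x * ψ y := by
  rcases h with h | h
  · exact _root_.mul_nonneg (h x hx) (h y hy)
  · exact mul_nonneg_of_nonpos_of_nonpos (h x hx) (h y hy)

/-- The parabolic operator `∂ₜ W - a ∂ₓₓ W - b ∂ₓ W`, evaluated at `(t, x)`. -/
noncomputable def parabolicOp (a b : ℝ → ℝ) (W : ℝ → ℝ → ℝ) (t x : ℝ) : ℝ :=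
  deriv (fun s ↦ W s x) t - a x * deriv (deriv (W t)) x - b x * deriv (W t) x

/-- `W` has at `(t, x)` the derivatives that occur in `parabolicOp`: once differentiable in time,
twice in space. -/
structure ParabolicDifferentiableAt (W : ℝ → ℝ → ℝ) (t x : ℝ) : Prop where
  time : DifferentiableAt ℝ (fun s ↦ W s x) t
  space : ∀ᶠ y in 𝓝 x, DifferentiableAt ℝ (W t) y
  deriv_space : DifferentiableAt ℝ (deriv (W t)) x

section ParabolicOp

variable {a b : ℝ → ℝ} {V W : ℝ → ℝ → ℝ} {t x : ℝ}

namespace ParabolicDifferentiableAt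

theorem deriv_sub_eventuallyEq (hW : ParabolicDifferentiableAt W t x)
    (hV : ParabolicDifferentiableAt V t x) :
    deriv ((W - V) t) =ᶠ[𝓝 x] deriv (W t) - deriv (V t) := by
  filter_upwards [hW.space, hV.space] with y hWy hVy using deriv_sub hWy hVy

theorem deriv_smul_eventuallyEq (hW : ParabolicDifferentiableAt W t x) (c : ℝ) :
    deriv ((c • W) t) =ᶠ[𝓝 x] c • deriv (W t) := by
  filter_upwards [hW.space] with y hWy using deriv_const_smul c hWy

theorem sub (hW : ParabolicDifferentiableAt W t x) (hV : ParabolicDifferentiableAt V t x) :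
    ParabolicDifferentiableAt (W - V) t x where
  time := hW.time.fun_sub hV.time
  space := by filter_upwards [hW.space, hV.space] with y hWy hVy using hWy.sub hVy
  deriv_space := (hW.deriv_space.sub hV.deriv_space).congr_of_eventuallyEq
    (hW.deriv_sub_eventuallyEq hV)

theorem const_smul (hW : ParabolicDifferentiableAt W t x) (c : ℝ) :
    ParabolicDifferentiableAt (c • W) t x where
  time := hW.time.fun_const_smul c
  space := by filter_upwards [hW.space] with y hWy using hWy.const_smul c
  deriv_space := (hW.deriv_space.const_smul c).congr_of_eventuallyEq (hW.deriv_smul_eventuallyEq c)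

end ParabolicDifferentiableAt

theorem parabolicOp_sub (hW : ParabolicDifferentiableAt W t x)
    (hV : ParabolicDifferentiableAt V t x) :
    parabolicOp a b (W - V) t x = parabolicOp a b W t x - parabolicOp a b V t x := by
  have hspace := hW.deriv_sub_eventuallyEq hV
  have htime : deriv (fun s ↦ (W - V) s x) t = deriv (fun s ↦ W s x) t - deriv (fun s ↦ V s x) t :=
    deriv_fun_sub hW.time hV.time
  rw [parabolicOp, parabolicOp, parabolicOp, htime, hspace.eq_of_nhds, hspace.deriv_eq,
    deriv_sub hW.deriv_space hV.deriv_space, Pi.sub_apply]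
  ring

theorem parabolicOp_const_smul (hW : ParabolicDifferentiableAt W t x) (c : ℝ) :
    parabolicOp a b (c • W) t x = c * parabolicOp a b W t x := by
  have hspace := hW.deriv_smul_eventuallyEq c
  have htime : deriv (fun s ↦ (c • W) s x) t = c * deriv (fun s ↦ W s x) t :=
    deriv_fun_const_smul c hW.time
  rw [parabolicOp, parabolicOp, htime, hspace.eq_of_nhds, hspace.deriv_eq,
    deriv_const_smul c hW.deriv_space, Pi.smul_apply, smul_eq_mul, smul_eq_mul]
  ring

theorem parabolicOp_eq_deriv_of_eq_zero (hW : W t = 0) :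
    parabolicOp a b W t x = deriv (fun s ↦ W s x) t := by
  have hderiv : deriv (0 : ℝ → ℝ) = 0 := deriv_const' 0
  simp [parabolicOp, hW, hderiv]

theorem parabolicOp_nonpos_of_isLocalMin (ha : 0 ≤ a x) (hW : ContinuousAt (W t) x)
    (hspace : IsLocalMin (W t) x) (htime : ∀ᶠ s in 𝓝[<] t, W t x ≤ W s x) :
    parabolicOp a b W t x ≤ 0 := by
  have hWt := deriv_nonpos_of_eventually_le_left (g := fun s ↦ W s x) htime
  have hWxx := mul_nonneg ha (deriv_deriv_nonneg_of_isLocalMin hspace hW)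
  rw [parabolicOp, hspace.deriv_eq_zero]
  linarith

theorem parabolicOp_add_mul_sub (hW : DifferentiableAt ℝ (fun s ↦ W s x) t) (c t₀ : ℝ) :
    parabolicOp a b (fun s y ↦ W s y + c * (s - t₀)) t x = parabolicOp a b W t x + c := by
  have htime : deriv (fun s ↦ W s x + c * (s - t₀)) t = deriv (fun s ↦ W s x) t + c := by
    rw [deriv_fun_add hW (by fun_prop)]
    simp
  simp only [parabolicOp, htime, deriv_add_const']
  ring

end ParabolicOp

section MinimumPrinciple

variable {a b : ℝ → ℝ} {V W : ℝ → ℝ → ℝ} {t₁ t₂ l r : ℝ}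

theorem nonneg_of_parabolicOp_pos (ha : ∀ x ∈ Ioo l r, 0 ≤ a x)
    (hW : ContinuousOn (fun p : ℝ × ℝ ↦ W p.1 p.2) (Icc t₁ t₂ ×ˢ Icc l r))
    (hop : ∀ t ∈ Ioc t₁ t₂, ∀ x ∈ Ioo l r, 0 < parabolicOp a b W t x)
    (hbot : ∀ x ∈ Icc l r, 0 ≤ W t₁ x) (hleft : ∀ t ∈ Icc t₁ t₂, 0 ≤ W t l)
    (hright : ∀ t ∈ Icc t₁ t₂, 0 ≤ W t r) {t x : ℝ} (ht : t ∈ Icc t₁ t₂) (hx : x ∈ Icc l r) :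
    0 ≤ W t x := by
  by_contra! hneg
  obtain ⟨⟨s, y⟩, ⟨hs : s ∈ Icc t₁ t₂, hy : y ∈ Icc l r⟩, hmin⟩ :=
    (isCompact_Icc.prod isCompact_Icc).exists_isMinOn ⟨(t, x), ht, hx⟩ hW
  have hle : ∀ s' ∈ Icc t₁ t₂, ∀ y' ∈ Icc l r, W s y ≤ W s' y' := fun s' hs' y' hy' ↦
    isMinOn_iff.1 hmin (s', y') ⟨hs', hy'⟩
  have hlt : W s y < 0 := (hle t ht x hx).trans_lt hneg
  have hs₁ : t₁ < s := hs.1.lt_of_ne (by rintro rfl; exact (hbot y hy).not_gt hlt)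
  have hly : l < y := hy.1.lt_of_ne (by rintro rfl; exact (hleft s hs).not_gt hlt)
  have hyr : y < r := hy.2.lt_of_ne (by rintro rfl; exact (hright s hs).not_gt hlt)
  have hnhds : Icc l r ∈ 𝓝 y := Icc_mem_nhds hly hyr
  have hcont : ContinuousAt (W s) y :=
    (hW.comp (f := fun z ↦ (s, z)) (by fun_prop) fun z hz ↦ ⟨hs, hz⟩).continuousAt hnhds
  have hspace : IsLocalMin (W s) y := by filter_upwards [hnhds] with z hz using hle s hs z hz
  have htime : ∀ᶠ s' in 𝓝[<] s, W s y ≤ W s' y := by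
    filter_upwards [Ioo_mem_nhdsLT hs₁] with s' hs'
    exact hle s' ⟨hs'.1.le, hs'.2.le.trans hs.2⟩ y hy
  exact (hop s ⟨hs₁, hs.2⟩ y ⟨hly, hyr⟩).not_ge
    (parabolicOp_nonpos_of_isLocalMin (ha y ⟨hly, hyr⟩) hcont hspace htime)

/-- A classical supersolution of `∂ₜ W = a ∂ₓₓ W + b ∂ₓ W` on the rectangle `[t₁, t₂] × [l, r]`.
The inequality is imposed off the parabolic boundary, that is, for `t₁ < t ≤ t₂` and `l < x < r`. -/
structure IsSupersolutionOn (a b : ℝ → ℝ) (W : ℝ → ℝ → ℝ) (t₁ t₂ l r : ℝ) : Prop where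
  continuousOn : ContinuousOn (fun p : ℝ × ℝ ↦ W p.1 p.2) (Icc t₁ t₂ ×ˢ Icc l r)
  differentiableAt : ∀ t ∈ Ioc t₁ t₂, ∀ x ∈ Ioo l r, ParabolicDifferentiableAt W t x
  parabolicOp_nonneg : ∀ t ∈ Ioc t₁ t₂, ∀ x ∈ Ioo l r, 0 ≤ parabolicOp a b W t x

namespace IsSupersolutionOn

theorem mono (hW : IsSupersolutionOn a b W t₁ t₂ l r) {s₁ s₂ l' r' : ℝ} (hs₁ : t₁ ≤ s₁)
    (hs₂ : s₂ ≤ t₂) (hl : l ≤ l') (hr : r' ≤ r) : IsSupersolutionOn a b W s₁ s₂ l' r' where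
  continuousOn := hW.continuousOn.mono (prod_mono (Icc_subset_Icc hs₁ hs₂) (Icc_subset_Icc hl hr))
  differentiableAt t ht x hx :=
    hW.differentiableAt t (Ioc_subset_Ioc hs₁ hs₂ ht) x (Ioo_subset_Ioo hl hr hx)
  parabolicOp_nonneg t ht x hx :=
    hW.parabolicOp_nonneg t (Ioc_subset_Ioc hs₁ hs₂ ht) x (Ioo_subset_Ioo hl hr hx)

theorem nonneg (hW : IsSupersolutionOn a b W t₁ t₂ l r) (ha : ∀ x ∈ Ioo l r, 0 ≤ a x)
    (hbot : ∀ x ∈ Icc l r, 0 ≤ W t₁ x) (hleft : ∀ t ∈ Icc t₁ t₂, 0 ≤ W t l)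
    (hright : ∀ t ∈ Icc t₁ t₂, 0 ≤ W t r) {t x : ℝ} (ht : t ∈ Icc t₁ t₂) (hx : x ∈ Icc l r) :
    0 ≤ W t x := by
  -- Adding `c (t - t₁)` makes the differential inequality strict; then let `c → 0`.
  have hperturbed : ∀ c > 0, 0 ≤ W t x + c * (t - t₁) := by
    intro c hc
    have hdrift : ∀ s ∈ Icc t₁ t₂, 0 ≤ c * (s - t₁) := fun s hs ↦
      mul_nonneg hc.le (sub_nonneg.2 hs.1)
    refine nonneg_of_parabolicOp_pos (a := a) (b := b) (W := fun s y ↦ W s y + c * (s - t₁)) ha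
      (hW.continuousOn.add (by fun_prop)) (fun s hs y hy ↦ ?_) (fun y hy ↦ by simpa using hbot y hy)
      (fun s hs ↦ add_nonneg (hleft s hs) (hdrift s hs))
      (fun s hs ↦ add_nonneg (hright s hs) (hdrift s hs)) ht hx
    rw [parabolicOp_add_mul_sub (hW.differentiableAt s hs y hy).time]
    exact add_pos_of_nonneg_of_pos (hW.parabolicOp_nonneg s hs y hy) hc
  have hlim : Tendsto (fun c ↦ W t x + c * (t - t₁)) (𝓝[>] 0) (𝓝 (W t x)) :=
    tendsto_nhdsWithin_of_tendsto_nhds (Continuous.tendsto' (by fun_prop) _ _ (by simp))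
  exact ge_of_tendsto hlim (eventually_mem_nhdsWithin.mono hperturbed)

end IsSupersolutionOn

/-- The travelling wave `exp (α (x + v t - c)) - 1`, which moves to the left with speed `v` and
vanishes on the line `x + v t = c`. It is the barrier of the strong minimum principle. -/
noncomputable def expWave (α v c t x : ℝ) : ℝ := Real.exp (α * (x + v * t - c)) - 1

section ExpWave

variable {α v c t x : ℝ}

theorem expWave_nonpos (hα : 0 ≤ α) (h : x + v * t ≤ c) : expWave α v c t x ≤ 0 :=
  sub_nonpos.2 (Real.exp_le_one_iff.2 (mul_nonpos_of_nonneg_of_nonpos hα (sub_nonpos.2 h)))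

theorem expWave_pos (hα : 0 < α) (h : c < x + v * t) : 0 < expWave α v c t x :=
  sub_pos.2 (Real.one_lt_exp_iff.2 (mul_pos hα (sub_pos.2 h)))

theorem expWave_le_expWave_of_le (hα : 0 ≤ α) (hv : 0 ≤ v) {s : ℝ} (hst : s ≤ t) :
    expWave α v c s x ≤ expWave α v c t x := by
  unfold expWave
  gcongr

theorem continuous_expWave : Continuous fun p : ℝ × ℝ ↦ expWave α v c p.1 p.2 := by
  unfold expWave
  fun_prop

theorem hasDerivAt_expWave_time :
    HasDerivAt (fun s ↦ expWave α v c s x) (α * v * Real.exp (α * (x + v * t - c))) t := by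
  have hphase : HasDerivAt (fun s ↦ α * (x + v * s - c)) (α * (v * 1)) t :=
    ((((hasDerivAt_id t).const_mul v).const_add x).sub_const c).const_mul α
  exact (hphase.exp.sub_const 1).congr_deriv (by ring)

theorem hasDerivAt_expWave_space :
    HasDerivAt (expWave α v c t) (α * Real.exp (α * (x + v * t - c))) x := by
  have hphase : HasDerivAt (fun y ↦ α * (y + v * t - c)) (α * 1) x :=
    (((hasDerivAt_id x).add_const (v * t)).sub_const c).const_mul α
  exact (hphase.exp.sub_const 1).congr_deriv (by ring)

theorem deriv_expWave_space :
    deriv (expWave α v c t) = α • (expWave α v c t + 1) := by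
  ext y
  simp [hasDerivAt_expWave_space.deriv, expWave]

theorem deriv_deriv_expWave_space :
    deriv (deriv (expWave α v c t)) x = α ^ 2 * Real.exp (α * (x + v * t - c)) := by
  rw [deriv_expWave_space]
  refine ((hasDerivAt_expWave_space.add_const 1).const_smul α).deriv.trans ?_
  rw [smul_eq_mul]
  ring

theorem parabolicDifferentiableAt_expWave : ParabolicDifferentiableAt (expWave α v c) t x where
  time := hasDerivAt_expWave_time.differentiableAt
  space := .of_forall fun _ ↦ hasDerivAt_expWave_space.differentiableAt
  deriv_space := by
    rw [deriv_expWave_space]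
    exact ((hasDerivAt_expWave_space.add_const 1).const_smul α).differentiableAt

theorem parabolicOp_expWave {a b : ℝ → ℝ} :
    parabolicOp a b (expWave α v c) t x =
      α * (v - a x * α - b x) * Real.exp (α * (x + v * t - c)) := by
  rw [parabolicOp, hasDerivAt_expWave_time.deriv, deriv_deriv_expWave_space,
    hasDerivAt_expWave_space.deriv]
  ring

theorem exists_forall_parabolicOp_expWave_nonpos {a b : ℝ → ℝ} {s : Set ℝ} {k B : ℝ} (hk : 0 < k)
    (ha : ∀ x ∈ s, k ≤ a x) (hb : ∀ x ∈ s, B ≤ b x) (v : ℝ) :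
    ∃ α > 0, ∀ c t, ∀ x ∈ s, parabolicOp a b (expWave α v c) t x ≤ 0 := by
  obtain ⟨α, hα, hαk⟩ : ∃ α > 0, k * α = |v| + |B| + 1 :=
    ⟨(|v| + |B| + 1) / k, by positivity, mul_div_cancel₀ _ hk.ne'⟩
  refine ⟨α, hα, fun c t x hx ↦ ?_⟩
  have hfactor : v - a x * α - b x ≤ 0 := by
    have hdiffusion : k * α ≤ a x * α := mul_le_mul_of_nonneg_right (ha x hx) hα.le
    linarith [hb x hx, le_abs_self v, neg_abs_le B]
  rw [parabolicOp_expWave]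
  exact mul_nonpos_of_nonpos_of_nonneg (mul_nonpos_of_nonneg_of_nonpos hα.le hfactor)
    (Real.exp_pos _).le

end ExpWave

namespace IsSupersolutionOn

theorem sub_smul (hW : IsSupersolutionOn a b W t₁ t₂ l r)
    (hVcont : Continuous fun p : ℝ × ℝ ↦ V p.1 p.2)
    (hVdiff : ∀ t x, ParabolicDifferentiableAt V t x)
    (hV : ∀ t, ∀ x ∈ Ioo l r, parabolicOp a b V t x ≤ 0) {d : ℝ} (hd : 0 ≤ d) :
    IsSupersolutionOn a b (W - d • V) t₁ t₂ l r where
  continuousOn := hW.continuousOn.sub (hVcont.const_smul d).continuousOn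
  differentiableAt t ht x hx := (hW.differentiableAt t ht x hx).sub ((hVdiff t x).const_smul d)
  parabolicOp_nonneg t ht x hx := by
    rw [parabolicOp_sub (hW.differentiableAt t ht x hx) ((hVdiff t x).const_smul d),
      parabolicOp_const_smul (hVdiff t x)]
    linarith [hW.parabolicOp_nonneg t ht x hx, mul_nonpos_of_nonneg_of_nonpos hd (hV t x hx)]

theorem exists_pos_forall_le_right (hW : IsSupersolutionOn a b W t₁ t₂ l r) (hlr : l ≤ r)
    (hright : ∀ t ∈ Icc t₁ t₂, 0 < W t r) : ∃ m > 0, ∀ t ∈ Icc t₁ t₂, m ≤ W t r :=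
  isCompact_Icc.exists_forall_le' (hW.continuousOn.comp (f := fun t ↦ (t, r)) (by fun_prop)
    fun _ ht ↦ ⟨ht, hlr, le_rfl⟩) hright

theorem pos_of_right_pos (hW : IsSupersolutionOn a b W t₁ t₂ l r) (ht : t₁ < t₂) {k B : ℝ}
    (hk : 0 < k) (ha : ∀ x ∈ Ioo l r, k ≤ a x) (hb : ∀ x ∈ Ioo l r, B ≤ b x)
    (hbot : ∀ x ∈ Icc l r, 0 ≤ W t₁ x) (hleft : ∀ t ∈ Icc t₁ t₂, 0 ≤ W t l)
    (hright : ∀ t ∈ Icc t₁ t₂, 0 < W t r) {x : ℝ} (hx : x ∈ Ioc l r) : 0 < W t₂ x := by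
  have hlr : l < r := hx.1.trans_le hx.2
  obtain ⟨m, hm, hmW⟩ := hW.exists_pos_forall_le_right hlr.le hright
  -- The zero of the wave leaves the right edge at time `t₁` and reaches the left edge at time `t₂`.
  set v := (r - l) / (t₂ - t₁)
  have hv₀ : 0 < v := div_pos (sub_pos.2 hlr) (sub_pos.2 ht)
  have hvl : l + v * t₂ = r + v * t₁ := by
    linear_combination div_mul_cancel₀ (r - l) (sub_pos.2 ht).ne'
  obtain ⟨α, hα, hop⟩ := exists_forall_parabolicOp_expWave_nonpos hk ha hb v
  set V := expWave α v (r + v * t₁)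
  have hVpos : ∀ y, l < y → 0 < V t₂ y := fun y hy ↦ expWave_pos hα (by linarith)
  set d := m / V t₂ r
  have hd₀ : 0 < d := div_pos hm (hVpos r hlr)
  have hdV : ∀ {t y}, V t y ≤ 0 → d * V t y ≤ 0 := mul_nonpos_of_nonneg_of_nonpos hd₀.le
  have hsuper : IsSupersolutionOn a b (W - d • V) t₁ t₂ l r :=
    hW.sub_smul continuous_expWave (fun _ _ ↦ parabolicDifferentiableAt_expWave)
      (hop _) hd₀.le
  have hge : 0 ≤ (W - d • V) t₂ x := by
    refine hsuper.nonneg (fun y hy ↦ hk.le.trans (ha y hy)) (fun y hy ↦ ?_) (fun t ht' ↦ ?_)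
      (fun t ht' ↦ ?_) (right_mem_Icc.2 ht.le) (Ioc_subset_Icc_self hx)
    · exact sub_nonneg.2 ((hdV (expWave_nonpos hα.le (by linarith [hy.2]))).trans (hbot y hy))
    · have hphase : l + v * t ≤ r + v * t₁ := hvl ▸ by gcongr; exact ht'.2
      exact sub_nonneg.2 ((hdV (expWave_nonpos hα.le hphase)).trans (hleft t ht'))
    · refine sub_nonneg.2 (le_trans ?_ (hmW t ht'))
      calc d * V t r ≤ d * V t₂ r := by gcongr; exact expWave_le_expWave_of_le hα.le hv₀.le ht'.2
        _ = m := div_mul_cancel₀ m (hVpos r hlr).ne'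
  exact (mul_pos hd₀ (hVpos x hx.1)).trans_le (sub_nonneg.1 hge)

theorem eventually_pos_of_right_pos (hW : IsSupersolutionOn a b W t₁ t₂ l r) (ht : t₁ < t₂)
    {k B : ℝ} (hk : 0 < k) (ha : ∀ x ∈ Ioo l r, k ≤ a x) (hb : ∀ x ∈ Ioo l r, B ≤ b x)
    (hbot : ∀ x ∈ Icc l r, 0 ≤ W t₁ x) (hleft : ∀ t ∈ Icc t₁ t₂, 0 ≤ W t l)
    (hright : ∀ᶠ t in 𝓝[>] t₁, 0 < W t r) :
    ∀ᶠ t in 𝓝[>] t₁, ∀ x ∈ Ioc l r, 0 < W t x := by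
  obtain ⟨τ, hτ : t₁ < τ, hτright⟩ := mem_nhdsGT_iff_exists_Ioc_subset.1 hright
  filter_upwards [Ioc_mem_nhdsGT (lt_min ht hτ)] with t ht' x hx
  have htt₂ : t ≤ t₂ := ht'.2.trans (min_le_left _ _)
  have htτ : t ≤ τ := ht'.2.trans (min_le_right _ _)
  have hlr : l ≤ r := hx.1.le.trans hx.2
  obtain ⟨s, hs₁, hst⟩ := exists_between ht'.1
  have hnonneg : ∀ y ∈ Icc l r, 0 ≤ W s y := fun y hy ↦
    (hW.mono le_rfl htt₂ le_rfl le_rfl).nonneg (fun z hz ↦ hk.le.trans (ha z hz)) hbot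
      (fun s' hs' ↦ hleft s' ⟨hs'.1, hs'.2.trans htt₂⟩)
      (fun s' hs' ↦ hs'.1.eq_or_lt.elim (fun h ↦ h ▸ hbot r ⟨hlr, le_rfl⟩)
        fun h ↦ (hτright ⟨h, hs'.2.trans htτ⟩).le) ⟨hs₁.le, hst.le⟩ hy
  exact (hW.mono hs₁.le htt₂ le_rfl le_rfl).pos_of_right_pos hst hk ha hb hnonneg
    (fun s' hs' ↦ hleft s' ⟨hs₁.le.trans hs'.1, hs'.2.trans htt₂⟩)
    (fun s' hs' ↦ hτright ⟨hs₁.trans_le hs'.1, hs'.2.trans htτ⟩) hx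

end IsSupersolutionOn

end MinimumPrinciple

namespace IsClassicalSolution

variable {T : ℝ} {σ b bt f : ℝ → ℝ} {u ut : ℝ → ℝ → ℝ} {t x : ℝ}

theorem continuousOn (hu : IsClassicalSolution T b σ f u) :
    ContinuousOn (fun p : ℝ × ℝ ↦ u p.1 p.2) (Ico 0 T ×ˢ univ) :=
  hu.1

theorem parabolicDifferentiableAt (hu : IsClassicalSolution T b σ f u) (ht : t ∈ Ico 0 T) :
    ParabolicDifferentiableAt u t x where
  time := hu.2.1 t ht x
  space := .of_forall (hu.2.2.1 t ht)
  deriv_space := hu.2.2.2.1 t ht x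

theorem initial (hu : IsClassicalSolution T b σ f u) : u 0 = f :=
  funext hu.2.2.2.2.2.2.2.2

theorem deriv_time_eq (hu : IsClassicalSolution T b σ f u) (ht : t ∈ Ico 0 T) :
    deriv (fun s ↦ u s x) t =
      1 / 2 * σ x ^ 2 * deriv (deriv (u t)) x + b x * deriv (u t) x :=
  hu.2.2.2.2.2.2.2.1 t ht x

theorem continuousOn_drift (hu : IsClassicalSolution T b σ f u) (hT : 0 < T) {s : Set ℝ}
    (hσ : ContinuousOn σ s) (hf : ∀ x ∈ s, deriv f x ≠ 0) : ContinuousOn b s := by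
  have h₀ : (0 : ℝ) ∈ Ico 0 T := left_mem_Ico.2 hT
  have hmaps : MapsTo (fun x : ℝ ↦ ((0 : ℝ), x)) s (Ico 0 T ×ˢ univ) := fun x _ ↦ ⟨h₀, mem_univ x⟩
  obtain ⟨-, -, -, -, hut, hux, huxx, -, -⟩ := id hu
  have hut₀ := hut.comp (by fun_prop) hmaps
  have hux₀ := hux.comp (by fun_prop) hmaps
  have huxx₀ := huxx.comp (by fun_prop) hmaps
  have hne : ∀ x ∈ s, deriv (u 0) x ≠ 0 := by rwa [hu.initial]
  refine ((hut₀.sub (((hσ.pow 2).const_mul (1 / 2)).mul huxx₀)).div hux₀ hne).congr fun x hx ↦ ?_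
  change b x = (deriv (fun s ↦ u s x) 0 - 1 / 2 * σ x ^ 2 * deriv (deriv (u 0)) x) / deriv (u 0) x
  rw [eq_div_iff (hne x hx), hu.deriv_time_eq h₀]
  ring

theorem parabolicOp_sub_eq (hu : IsClassicalSolution T b σ f u) {g : ℝ → ℝ}
    (hut : IsClassicalSolution T bt σ g ut) (ht : t ∈ Ico 0 T) :
    parabolicOp (fun x ↦ 1 / 2 * σ x ^ 2) b (u - ut) t x = (b x - bt x) * deriv (ut t) x := by
  rw [parabolicOp_sub (hu.parabolicDifferentiableAt ht) (hut.parabolicDifferentiableAt ht),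
    parabolicOp, parabolicOp, hu.deriv_time_eq ht, hut.deriv_time_eq ht]
  ring

theorem eventually_deriv_mul_deriv_pos (hu : IsClassicalSolution T b σ f u) (hT : 0 < T)
    {l r : ℝ} (hf : ∀ x ∈ Icc l r, deriv f x ≠ 0) (hx : x ∈ Icc l r) :
    ∀ᶠ t in 𝓝[≥] 0, ∀ y ∈ Icc l r, 0 < deriv f x * deriv (u t) y := by
  have h₀ : (0 : ℝ) ∈ Ico 0 T := left_mem_Ico.2 hT
  have hinit : ∀ y ∈ Icc l r, 0 < deriv f x * deriv (u 0) y := fun y hy ↦ by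
    rw [hu.initial]
    exact deriv_mul_deriv_pos (convex_Icc l r)
      (fun z _ ↦ hu.initial ▸ (hu.parabolicDifferentiableAt h₀).space.self_of_nhds) hf hx hy
  have hlocal : ∀ y ∈ Icc l r, ∀ᶠ p in 𝓝[≥] (0 : ℝ) ×ˢ 𝓝 y,
      0 < deriv f x * deriv (u p.1) p.2 := fun y hy ↦ by
    have hcont := hu.2.2.2.2.2.1.const_mul (deriv f x) (0, y) ⟨h₀, mem_univ y⟩
    have hnear := hcont.eventually (lt_mem_nhds (hinit y hy))
    rwa [nhdsWithin_prod_eq, nhdsWithin_univ, nhdsWithin_Ico_eq_nhdsGE hT] at hnear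
  have htube : {p : ℝ × ℝ | 0 < deriv f x * deriv (u p.1) p.2} ∈ 𝓝[≥] 0 ×ˢ 𝓝ˢ (Icc l r) :=
    isCompact_Icc.mem_prod_nhdsSet_of_forall hlocal
  filter_upwards [Eventually.curry htube] with t ht y hy using ht.self_of_nhdsSet y hy

theorem exists_isSupersolutionOn (hu : IsClassicalSolution T b σ f u)
    (hut : IsClassicalSolution T bt σ f ut) (hT : 0 < T) {l r : ℝ}
    (hf : ∀ x ∈ Icc l r, deriv f x ≠ 0) (hsign : ConstSignOn (fun x ↦ b x - bt x) (Icc l r))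
    (hx : x ∈ Icc l r) :
    ∃ τ > 0, IsSupersolutionOn (fun x ↦ 1 / 2 * σ x ^ 2) b
      (((b x - bt x) * deriv f x) • (u - ut)) 0 τ l r := by
  obtain ⟨τ, hτ, hτ'⟩ := mem_nhdsGE_iff_exists_Icc_subset.1
    ((hut.eventually_deriv_mul_deriv_pos hT hf hx).and (Ico_mem_nhdsGE hT))
  have hdiff : ∀ t ∈ Icc 0 τ, ∀ y, ParabolicDifferentiableAt (u - ut) t y := fun t ht y ↦
    (hu.parabolicDifferentiableAt (hτ' ht).2).sub (hut.parabolicDifferentiableAt (hτ' ht).2)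
  refine ⟨τ, hτ, ⟨?_, fun t ht y _ ↦ (hdiff t (Ioc_subset_Icc_self ht) y).const_smul _, ?_⟩⟩
  · exact ((hu.continuousOn.sub hut.continuousOn).const_smul ((b x - bt x) * deriv f x)).mono
      (prod_mono (fun t ht ↦ (hτ' ht).2) (subset_univ _))
  · intro t ht y hy
    have ht' := Ioc_subset_Icc_self ht
    have hy' := Ioo_subset_Icc_self hy
    calc 0 ≤ ((b x - bt x) * (b y - bt y)) * (deriv f x * deriv (ut t) y) :=
          mul_nonneg (hsign.mul_nonneg hx hy') ((hτ' ht').1 y hy').le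
      _ = parabolicOp _ b (((b x - bt x) * deriv f x) • (u - ut)) t y := by
          rw [parabolicOp_const_smul (hdiff t ht' y), hu.parabolicOp_sub_eq hut (hτ' ht').2]
          ring

theorem eventually_smul_sub_pos (hu : IsClassicalSolution T b σ f u)
    (hut : IsClassicalSolution T bt σ f ut) (hT : 0 < T) (hfx : deriv f x ≠ 0)
    (hne : b x ≠ bt x) :
    ∀ᶠ t in 𝓝[>] 0, 0 < (((b x - bt x) * deriv f x) • (u - ut)) t x := by
  set e := (b x - bt x) * deriv f x
  have h₀ : (0 : ℝ) ∈ Ico 0 T := left_mem_Ico.2 hT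
  have hzero : (e • (u - ut)) 0 = 0 := by simp [hu.initial, hut.initial]
  have hdiff : ParabolicDifferentiableAt (u - ut) 0 x :=
    (hu.parabolicDifferentiableAt h₀).sub (hut.parabolicDifferentiableAt h₀)
  have hderiv : deriv (fun s ↦ (e • (u - ut)) s x) 0 = e * e := by
    rw [← parabolicOp_eq_deriv_of_eq_zero (a := fun x ↦ 1 / 2 * σ x ^ 2) (b := b) hzero,
      parabolicOp_const_smul hdiff, hu.parabolicOp_sub_eq hut h₀, hut.initial]
  have hpos : 0 < e * e := mul_self_pos.2 (mul_ne_zero (sub_ne_zero.2 hne) hfx)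
  have hlt := eventually_lt_of_deriv_pos (hpos.trans_eq hderiv.symm)
  rwa [hzero] at hlt

theorem eventually_ne_of_drift_ne (hu : IsClassicalSolution T b σ f u)
    (hut : IsClassicalSolution T bt σ f ut) (hT : 0 < T) {l r : ℝ} (hlr : l ≤ r)
    (hσ : ContinuousOn σ (Icc l r)) (hσ₀ : ∀ x ∈ Icc l r, σ x ≠ 0)
    (hf : ∀ x ∈ Icc l r, deriv f x ≠ 0) (hsign : ConstSignOn (fun x ↦ b x - bt x) (Icc l r))
    (hleft : ∀ᶠ t in 𝓝[>] 0, u t l = ut t l) (hne : b r ≠ bt r) :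
    ∀ᶠ t in 𝓝[>] 0, ∀ x ∈ Ioc l r, u t x ≠ ut t x := by
  have hr : r ∈ Icc l r := right_mem_Icc.2 hlr
  obtain ⟨τ, hτ, hsuper⟩ := hu.exists_isSupersolutionOn hut hT hf hsign hr
  have hright := hu.eventually_smul_sub_pos hut hT (hf r hr) hne
  set e := (b r - bt r) * deriv f r
  have ha₀ : ∀ x ∈ Icc l r, 0 < 1 / 2 * σ x ^ 2 := fun x hx ↦
    mul_pos one_half_pos (sq_pos_of_ne_zero (hσ₀ x hx))
  obtain ⟨k, hk, hka⟩ := isCompact_Icc.exists_forall_le' ((hσ.pow 2).const_mul (1 / 2)) ha₀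
  obtain ⟨B, hB⟩ := isCompact_Icc.bddBelow_image (hu.continuousOn_drift hT hσ hf)
  obtain ⟨t, ht : 0 < t, htleft⟩ :=
    mem_nhdsGT_iff_exists_Ioc_subset.1 (hleft.and (Ioc_mem_nhdsGT hτ))
  have htτ : t ≤ τ := (htleft (right_mem_Ioc.2 ht)).2.2
  have hinit : ∀ x, (e • (u - ut)) 0 x = 0 := by simp [hu.initial, hut.initial]
  have hzero : ∀ s ∈ Icc 0 t, (e • (u - ut)) s l = 0 := fun s hs ↦ by
    rcases hs.1.eq_or_lt with rfl | hs₀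
    · exact hinit l
    · simp [(htleft ⟨hs₀, hs.2⟩).1]
  filter_upwards [(hsuper.mono le_rfl htτ le_rfl le_rfl).eventually_pos_of_right_pos ht hk
    (fun x hx ↦ hka x (Ioo_subset_Icc_self hx))
    (fun x hx ↦ hB (mem_image_of_mem b (Ioo_subset_Icc_self hx)))
    (fun x _ ↦ (hinit x).ge) (fun s hs ↦ (hzero s hs).ge) hright] with s hs x hx heq
  exact (hs x hx).ne' (by simp [heq])

end IsClassicalSolution

theorem drift_uniqueness_constant_sign_interval_general {T : ℝ} {σ b bt f : ℝ → ℝ}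
    {u ut : ℝ → ℝ → ℝ} {x₀ x₂ : ℝ} {ω : Set ℝ} (hT : 0 < T)
    (hσ : ContinuousOn σ (Icc x₀ x₂)) (hσ₀ : ∀ x ∈ Icc x₀ x₂, σ x ≠ 0)
    (hf : ∀ x ∈ Icc x₀ x₂, deriv f x ≠ 0)
    (hu : IsClassicalSolution T b σ f u) (hut : IsClassicalSolution T bt σ f ut)
    (hω : ω ∈ 𝓝[≥] x₀) (hobs : ∀ᶠ t in 𝓝[>] 0, ∀ x ∈ ω, u t x = ut t x)
    (hsign : ConstSignOn (fun x ↦ b x - bt x) (Icc x₀ x₂)) :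
    ∀ x ∈ Icc x₀ x₂, b x = bt x := by
  intro x₁ hx₁
  by_contra hne
  have hx₀ : x₀ ∈ ω := mem_of_mem_nhdsWithin self_mem_Ici hω
  suffices ∃ z ∈ ω, ∀ᶠ t in 𝓝[>] 0, u t z ≠ ut t z by
    obtain ⟨z, hz, hne_z⟩ := this
    obtain ⟨t, hne_t, heq⟩ := (hne_z.and hobs).exists
    exact hne_t (heq z hz)
  rcases hx₁.1.eq_or_lt with rfl | hlt
  · refine ⟨x₀, hx₀, (hu.eventually_smul_sub_pos hut hT (hf x₀ hx₁) hne).mono fun t ht heq ↦ ?_⟩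
    exact ht.ne' (by simp [heq])
  obtain ⟨z, hzω, hz⟩ : ∃ z ∈ ω, z ∈ Ioc x₀ x₁ :=
    Eventually.exists (f := 𝓝[>] x₀)
      (inter_mem (nhdsWithin_mono _ Ioi_subset_Ici_self hω) (Ioc_mem_nhdsGT hlt))
  have hsub : Icc x₀ x₁ ⊆ Icc x₀ x₂ := Icc_subset_Icc_right hx₁.2
  have hne_left := hu.eventually_ne_of_drift_ne hut hT hx₁.1 (hσ.mono hsub)
    (fun x hx ↦ hσ₀ x (hsub hx)) (fun x hx ↦ hf x (hsub hx)) (hsign.mono hsub)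
    (hobs.mono fun t ht ↦ ht x₀ hx₀) hne
  exact ⟨z, hzω, hne_left.mono fun t ht ↦ ht z hz⟩

/-- Key step in the proof of Theorem 1: on an interval `[x₀, x₂]` (with `x₀` in the
observation set) where `b - bt` has a constant sign, the observation forces `b = bt`. -/
theorem drift_uniqueness_constant_sign_interval
    (T : ℝ) (hT : 0 < T)
    (sigma b bt : ℝ → ℝ)
    (hsLip : ∃ K, LipschitzWith K sigma) (hspos : ∀ x, 0 < sigma x)
    (hb : ClassM b) (hbt : ClassM bt)
    (f : ℝ → ℝ) (hf : ContDiff ℝ 2 f) (hfd : ∀ x, deriv f x ≠ 0)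
    (u ut : ℝ → ℝ → ℝ)
    (hu : IsClassicalSolution T b sigma f u)
    (hut : IsClassicalSolution T bt sigma f ut)
    (ε : ℝ) (hε : ε ∈ Ioo 0 T)
    (ω : Set ℝ) (hω : IsOpen ω) (hωne : ω.Nonempty)
    (hobs : ∀ t ∈ Ioo 0 ε, ∀ x ∈ ω, u t x = ut t x)
    (x₀ x₂ : ℝ) (hx₀ : x₀ ∈ ω) (hx₂ : x₀ < x₂)
    (hsign : ConstSignOn (fun x => b x - bt x) (Icc x₀ x₂)) :
    ∀ x ∈ Icc x₀ x₂, b x = bt x := by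
  obtain ⟨K, hK⟩ := hsLip
  exact drift_uniqueness_constant_sign_interval_general hT hK.continuous.continuousOn
    (fun x _ ↦ (hspos x).ne') (fun x _ ↦ hfd x) hu hut
    (mem_nhdsWithin_of_mem_nhds (hω.mem_nhds hx₀)) (eventually_of_mem (Ioo_mem_nhdsGT hε.1) hobs)
    hsign
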